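/- For every real x ≥ 1 and every real ε with 0 < ε < 1, one has x^(ε·(1+ε)) − (x^(1+ε) − x)^ε ≥ (ε/2)·x^(ε²), and in particular x^(ε·(1+ε)) − (x^(1+ε) − x)^ε ≥ ε/2. -/

import Mathlib

/-!
The graph of the concave function `t ↦ t ^ ε` lies below its tangent line at `x ^ (1 + ε)`. Hence
decreasing the argument from `x ^ (1 + ε)` by `x` lowers the value by at least
`ε * (x ^ (1 + ε)) ^ (ε - 1) * x = ε * x ^ (ε ^ 2)`.
-/

theorem mul_rpow_sub_one_mul_sub_le_rpow_sub_rpow {a b p : ℝ} (ha : 0 < a) (hb : 0 ≤ b)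
    (hp : 0 ≤ p) (hp' : p ≤ 1) : p * a ^ (p - 1) * (a - b) ≤ a ^ p - b ^ p := by
  have bernoulli : (b / a) ^ p ≤ 1 + p * (b / a - 1) := by
    have hratio : -1 ≤ b / a - 1 := by linarith [div_nonneg hb ha.le]
    simpa only [add_sub_cancel] using rpow_one_add_le_one_add_mul_self hratio hp hp'
  have tangent : b ^ p ≤ a ^ p + p * a ^ (p - 1) * (b - a) :=
    calc b ^ p = a ^ p * (b / a) ^ p := by
          rw [← Real.mul_rpow ha.le (div_nonneg hb ha.le), mul_div_cancel₀ b ha.ne']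
      _ ≤ a ^ p * (1 + p * (b / a - 1)) := by gcongr
      _ = a ^ p + p * a ^ (p - 1) * (b - a) := by
          rw [Real.rpow_sub_one ha.ne']
          field_simp
  linarith

theorem eflh_expconcave_recursion_general {x ε : ℝ} (hx : 1 ≤ x) (hε : 0 ≤ ε) (hε' : ε ≤ 1) :
    ε * x ^ (ε ^ 2) ≤ x ^ (ε * (1 + ε)) - (x ^ (1 + ε) - x) ^ ε := by
  have hx₀ : 0 < x := one_pos.trans_le hx
  have hsub : 0 ≤ x ^ (1 + ε) - x :=
    sub_nonneg.2 (Real.self_le_rpow_of_one_le hx (le_add_of_nonneg_right hε))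
  calc ε * x ^ (ε ^ 2)
      = ε * (x ^ (1 + ε)) ^ (ε - 1) * (x ^ (1 + ε) - (x ^ (1 + ε) - x)) := by
        rw [sub_sub_cancel, mul_assoc, ← Real.rpow_mul hx₀.le, ← Real.rpow_add_one hx₀.ne']
        ring_nf
    _ ≤ (x ^ (1 + ε)) ^ ε - (x ^ (1 + ε) - x) ^ ε :=
        mul_rpow_sub_one_mul_sub_le_rpow_sub_rpow (Real.rpow_pos_of_pos hx₀ _) hsub hε hε'
    _ = x ^ (ε * (1 + ε)) - (x ^ (1 + ε) - x) ^ ε := by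
        rw [← Real.rpow_mul hx₀.le, mul_comm (1 + ε) ε]

/-- The recursion inequality in the proof of Lemma 6.2 of the paper. -/
theorem eflh_expconcave_recursion (x : ℝ) (hx : 1 ≤ x) (ε : ℝ) (hε : 0 < ε)
    (hε' : ε < 1) :
    x ^ (ε * (1 + ε)) - (x ^ (1 + ε) - x) ^ ε ≥ ε / 2 * x ^ (ε ^ 2) ∧
      x ^ (ε * (1 + ε)) - (x ^ (1 + ε) - x) ^ ε ≥ ε / 2 := by
  have hgap := eflh_expconcave_recursion_general hx hε.le hε'.le
  have hpow : ε ≤ ε * x ^ (ε ^ 2) :=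
    le_mul_of_one_le_right hε.le (Real.one_le_rpow hx (sq_nonneg ε))
  constructor <;> linarith
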